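/- Let n ∈ ℕ, let k be a positive integer, and let b > 0, c > 0, A > 0 be real numbers. Then ∫_c^∞ y^{−n} (y−c)^{k−1} exp(−(y−c)/b − A/y) dy = Σ_{j=0}^{k−1} C(k−1, j) (−c)^{k−1−j} e^{c/b} b^{j−n+1} Γ(j−n+1, c/b; A/b), where C(k−1, j) is the binomial coefficient and Γ(s, x; B) := ∫_x^∞ t^{s−1} exp(−t − B/t) dt is the extended incomplete Gamma function. -/

import Mathlib

open MeasureTheory

/-- The extended incomplete Gamma function
`Γ(s, x; B) = ∫ₓ^∞ t ^ (s - 1) exp (-t - B/t) dt`. -/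
noncomputable def extGamma (s x B : ℝ) : ℝ :=
  ∫ t in Set.Ioi x, t ^ (s - 1) * Real.exp (-t - B / t)

section

variable {a b c x : ℝ}

lemma integrableOn_Ioi_rpow_mul_exp_neg_mul (p : ℝ) (ha : 0 < a) (hx : 0 < x) :
    IntegrableOn (fun t : ℝ => t ^ p * Real.exp (-a * t)) (Set.Ioi x) := by
  have hcont : ContinuousOn (fun t : ℝ => t ^ p * Real.exp (-a * t)) (Set.Ici x) :=
    (continuousOn_id.rpow_const fun t ht => Or.inl (hx.trans_le ht).ne').mul (by fun_prop)
  have hdecay : (fun t : ℝ => t ^ p * Real.exp (-a * t))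
      =O[Filter.atTop] fun t => Real.exp (-(a / 2) * t) := by
    simpa only [mul_comm] using
      (isLittleO_exp_mul_rpow_of_lt p (neg_lt_neg (half_lt_self ha))).isBigO
  exact integrable_of_isBigO_exp_neg (half_pos ha) hcont hdecay

lemma integrableOn_Ioi_rpow_mul_exp_neg_mul_sub_div (p B : ℝ) (ha : 0 < a) (hx : 0 < x) :
    IntegrableOn (fun t : ℝ => t ^ p * Real.exp (-a * t - B / t)) (Set.Ioi x) := by
  have hbound : ∀ t ∈ Set.Ioi x, ‖Real.exp (-B / t)‖ ≤ Real.exp (|B| / x) := fun t ht => by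
    rw [Real.norm_eq_abs, Real.abs_exp, Real.exp_le_exp]
    calc -B / t ≤ |-B / t| := le_abs_self _
      _ = |B| / t := by rw [abs_div, abs_neg, abs_of_pos (hx.trans ht)]
      _ ≤ |B| / x := div_le_div_of_nonneg_left (abs_nonneg B) hx (le_of_lt ht)
  refine ((integrableOn_Ioi_rpow_mul_exp_neg_mul p ha hx).mul_bdd (by fun_prop)
    (ae_restrict_of_forall_mem measurableSet_Ioi hbound)).congr (.of_forall fun t => ?_)
  dsimp only
  rw [mul_assoc, ← Real.exp_add, neg_div, ← sub_eq_add_neg]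

lemma integral_Ioi_rpow_mul_exp_eq_extGamma (p A : ℝ) (hb : 0 < b) (hc : 0 ≤ c) :
    ∫ y in Set.Ioi c, y ^ p * Real.exp (-y / b - A / y)
      = b ^ (p + 1) * extGamma (p + 1) (c / b) (A / b) := by
  have hsubst : ∀ t ∈ Set.Ioi (c / b), (b * t) ^ p * Real.exp (-(b * t) / b - A / (b * t))
      = b ^ p * (t ^ (p + 1 - 1) * Real.exp (-t - A / b / t)) := fun t ht => by
    have ht : 0 < t := (div_nonneg hc hb.le).trans_lt ht
    rw [Real.mul_rpow hb.le ht.le, neg_div, mul_div_cancel_left₀ t hb.ne', div_div,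
      add_sub_cancel_right, mul_assoc]
  calc ∫ y in Set.Ioi c, y ^ p * Real.exp (-y / b - A / y)
      = b * ∫ t in Set.Ioi (c / b),
          (b * t) ^ p * Real.exp (-(b * t) / b - A / (b * t)) := by
        rw [← smul_eq_mul, integral_comp_mul_left_Ioi'
          (fun y => y ^ p * Real.exp (-y / b - A / y)) (c / b) hb, mul_div_cancel₀ c hb.ne']
    _ = b ^ (p + 1) * extGamma (p + 1) (c / b) (A / b) := by
        rw [setIntegral_congr_fun measurableSet_Ioi hsubst, integral_const_mul,
          Real.rpow_add_one hb.ne', extGamma]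
        ring

end

lemma rpow_mul_sub_pow_mul_exp_eq_sum (s : ℝ) (m : ℕ) (b c A : ℝ) {y : ℝ} (hy : y ≠ 0) :
    y ^ (-s) * (y - c) ^ m * Real.exp (-(y - c) / b - A / y)
      = ∑ j ∈ Finset.range (m + 1), (m.choose j : ℝ) * (-c) ^ (m - j) * Real.exp (c / b)
          * (y ^ (j - s) * Real.exp (-y / b - A / y)) := by
  have hexp : Real.exp (-(y - c) / b - A / y)
      = Real.exp (c / b) * Real.exp (-y / b - A / y) := by
    rw [← Real.exp_add]
    ring_nf
  rw [hexp, sub_eq_add_neg y c, add_pow, Finset.mul_sum, Finset.sum_mul]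
  refine Finset.sum_congr rfl fun j _ => ?_
  have hpow : y ^ ((j : ℝ) - s) = y ^ (-s) * y ^ j := by
    rw [sub_eq_neg_add, Real.rpow_add_natCast hy]
  rw [hpow]
  ring

theorem integral_eq_sum_extGamma_general (s : ℝ) (m : ℕ) {b c : ℝ} (A : ℝ)
    (hb : 0 < b) (hc : 0 < c) :
    (∫ y in Set.Ioi c, y ^ (-s) * (y - c) ^ m * Real.exp (-(y - c) / b - A / y))
      = ∑ j ∈ Finset.range (m + 1), (m.choose j : ℝ) * (-c) ^ (m - j)
          * Real.exp (c / b) * b ^ (j - s + 1) * extGamma (j - s + 1) (c / b) (A / b) := by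
  have hint (p : ℝ) :
      IntegrableOn (fun y : ℝ => y ^ p * Real.exp (-y / b - A / y)) (Set.Ioi c) := by
    simpa only [neg_mul, inv_mul_eq_div, neg_div] using
      integrableOn_Ioi_rpow_mul_exp_neg_mul_sub_div p A (inv_pos.mpr hb) hc
  rw [setIntegral_congr_fun measurableSet_Ioi fun y hy =>
      rpow_mul_sub_pow_mul_exp_eq_sum s m b c A (hc.trans hy).ne',
    integral_finsetSum _ fun (j : ℕ) _ => (hint (j - s)).const_mul _]
  refine Finset.sum_congr rfl fun j _ => ?_
  rw [integral_const_mul, integral_Ioi_rpow_mul_exp_eq_extGamma (j - s) A hb hc.le, ← mul_assoc]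

/-- Binomial expansion and the substitution `z = y / b` reduce the key integral of the
paper's Theorem 1 to extended incomplete Gamma functions:
`∫_c^∞ y⁻ⁿ (y-c)^(k-1) exp (-(y-c)/b - A/y) dy
  = ∑_{j=0}^{k-1} C(k-1, j) (-c)^(k-1-j) e^(c/b) b^(j-n+1) Γ(j-n+1, c/b; A/b)`. -/
theorem integral_eq_sum_extGamma (n k : ℕ) (hk : 0 < k) (b c A : ℝ)
    (hb : 0 < b) (hc : 0 < c) (hA : 0 < A) :
    (∫ y in Set.Ioi c, y ^ (-(n : ℤ)) * (y - c) ^ (k - 1)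
        * Real.exp (-(y - c) / b - A / y))
      = ∑ j ∈ Finset.range k, ((k - 1).choose j : ℝ) * (-c) ^ (k - 1 - j)
          * Real.exp (c / b) * b ^ ((j : ℤ) - n + 1)
          * extGamma ((j : ℝ) - n + 1) (c / b) (A / b) := by
  simpa [← Real.rpow_intCast, Nat.sub_add_cancel hk] using
    integral_eq_sum_extGamma_general n (k - 1) A hb hc
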